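/- Let P be a plurisubharmonic, non-pluriharmonic real polynomial on C² that is homogeneous of degree 2k (k ≥ 1 an integer). Then there are at most finitely many complex lines passing through the origin of C² along which P is harmonic; equivalently, the set {ζ ∈ C : the function w ↦ P(ζw, w) is harmonic on C} ∪ {∞ if w ↦ P(w, 0) is harmonic} is finite. -/

import Mathlib

/-!
Write `P = ∑ p_j` with `p_j` of degree `j` in `z` and `2k - j` in `z̄`. In the radial direction the
Levi form of `P` is, up to a factor, `∑ j (2k - j) p_j(z)` (`levi_radial`), and it vanishes on every
line along which `P` is harmonic. Summing over the rotations by the `(2k+1)`-st roots of unity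
isolates the part of bidegree `(k, k)`: `R = rotSum k P = (2k+1) p_k` is plurisubharmonic, it is a
positive multiple of the sum of the radial Levi forms of `P`, hence `R ≥ 0`, and `R = 0` on every
line of harmonicity (`sum_levi_eq`, `rotSum_nonneg`, `rotSum_eq_zero_of_harmonic`). If `R` vanishes
identically, then the nonnegative radial Levi form of `P` vanishes identically, so `p_j = 0` for
`0 < j < 2k` and `P` is pluriharmonic (`isPluriharmonic_of_rotSum_eq_zero`).

It remains to see that `R` vanishes identically as soon as it vanishes on `3k + 1` distinct lines
(`eq_zero_of_many_lines`). Let `E` be the product of the linear forms defining these lines. The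
quotient `R³|z|² / |E|²` is homogeneous of degree `0` and extends continuously by `0` across the
lines, because `R` is locally Lipschitz; if `R` is not identically zero, the quotient attains a
positive maximum at some point `q` (`exists_max`). By Euler's relation `∂R(q)` is nonzero in the
direction `q`, so there is a direction `v` transversal to `q` with `∂R(q) v = 0`. The first and
second order conditions at the maximum along the real lines `q + t v` and `q + t (i v)`
(`conditions_at_max`), together with the nonnegativity of the Levi form of `R`, give
`|⟨v, q⟩|² ≥ |v|² |q|²`, which contradicts the strict Cauchy–Schwarz inequality. In other words,
`3 log R + log |z|² - log |E|²` has a positive Laplacian at `q` along `q + ℂ v`, so it has no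
maximum there.
-/

open Complex ComplexConjugate Metric Set

noncomputable section

/-- Wirtinger derivative `∂f` in the complex direction `e`. -/
def wd (f : ℂ × ℂ → ℂ) (e : ℂ × ℂ) (z : ℂ × ℂ) : ℂ :=
  (1 / 2) * (fderiv ℝ f z e - Complex.I * fderiv ℝ f z (Complex.I • e))

/-- Conjugate Wirtinger derivative `∂̄f` in the complex direction `e`. -/
def wdbar (f : ℂ × ℂ → ℂ) (e : ℂ × ℂ) (z : ℂ × ℂ) : ℂ :=
  (1 / 2) * (fderiv ℝ f z e + Complex.I * fderiv ℝ f z (Complex.I • e))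

/-- Mixed second derivative `∂²P/∂z_(ej)∂z̄_(ek)` of a real-valued function. -/
def mixedDeriv (P : ℂ × ℂ → ℝ) (ej ek : ℂ × ℂ) (z : ℂ × ℂ) : ℂ :=
  wd (wdbar (fun w => (P w : ℂ)) ek) ej z

/-- The Levi form of `P` at `z` in the direction `v`. -/
def leviForm (P : ℂ × ℂ → ℝ) (z v : ℂ × ℂ) : ℂ :=
  mixedDeriv P (1, 0) (1, 0) z * v.1 * conj v.1 +
  mixedDeriv P (1, 0) (0, 1) z * v.1 * conj v.2 +
  mixedDeriv P (0, 1) (1, 0) z * v.2 * conj v.1 +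
  mixedDeriv P (0, 1) (0, 1) z * v.2 * conj v.2

/-- `P` is plurisubharmonic on all of `ℂ²`. -/
def IsPsh (P : ℂ × ℂ → ℝ) : Prop := ∀ z v, 0 ≤ (leviForm P z v).re

/-- `P` is strictly plurisubharmonic at `z`. -/
def IsStrictPshAt (P : ℂ × ℂ → ℝ) (z : ℂ × ℂ) : Prop :=
  ∀ v, v ≠ 0 → 0 < (leviForm P z v).re

/-- The Levi-degeneracy set of `P`. -/
def leviDegen (P : ℂ × ℂ → ℝ) : Set (ℂ × ℂ) :=
  {z | ¬ IsStrictPshAt P z}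

/-- One-variable Wirtinger derivative. -/
def wd1 (f : ℂ → ℂ) (z : ℂ) : ℂ :=
  (1 / 2) * (fderiv ℝ f z 1 - Complex.I * fderiv ℝ f z Complex.I)

def wdbar1 (f : ℂ → ℂ) (z : ℂ) : ℂ :=
  (1 / 2) * (fderiv ℝ f z 1 + Complex.I * fderiv ℝ f z Complex.I)

/-- The Laplacian of a function on `ℂ`, as `4 ∂∂̄`. -/
def lap (u : ℂ → ℝ) (z : ℂ) : ℂ := 4 * wd1 (wdbar1 fun w => (u w : ℂ)) z

def IsHarmonic (u : ℂ → ℝ) : Prop := ∀ z, lap u z = 0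

def Subharmonic (u : ℂ → ℝ) : Prop := ∀ z, 0 ≤ (lap u z).re

/-- The Laplacian of a function on `ℂ² ≅ ℝ⁴`. -/
def lap2 (P : ℂ × ℂ → ℝ) (z : ℂ × ℂ) : ℂ :=
  4 * (mixedDeriv P (1, 0) (1, 0) z + mixedDeriv P (0, 1) (0, 1) z)

/-- `P` is a real-valued polynomial in `z₁, z̄₁, z₂, z̄₂`. -/
def IsRealPoly2 (P : ℂ × ℂ → ℝ) : Prop :=
  ∃ Q : MvPolynomial (Fin 4) ℂ,
    ∀ z : ℂ × ℂ, (P z : ℂ) = MvPolynomial.eval ![z.1, conj z.1, z.2, conj z.2] Q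

/-- `u` is a real-valued polynomial in `z, z̄`. -/
def IsRealPoly1 (u : ℂ → ℝ) : Prop :=
  ∃ Q : MvPolynomial (Fin 2) ℂ,
    ∀ z : ℂ, (u z : ℂ) = MvPolynomial.eval ![z, conj z] Q

/-- `F` is a holomorphic polynomial map on `ℂ²`. -/
def IsPolyMap2 (F : ℂ × ℂ → ℂ) : Prop :=
  ∃ Q : MvPolynomial (Fin 2) ℂ, ∀ z : ℂ × ℂ, F z = MvPolynomial.eval ![z.1, z.2] Q

/-- `P` has no pluriharmonic terms: in its (unique) monomial expansion in
`z₁, z̄₁, z₂, z̄₂` every monomial involves both a conjugated and an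
unconjugated variable. Indexing: `0 ↦ z₁`, `1 ↦ z̄₁`, `2 ↦ z₂`, `3 ↦ z̄₂`. -/
def NoPluriharmonicTerms (P : ℂ × ℂ → ℝ) : Prop :=
  ∃ Q : MvPolynomial (Fin 4) ℂ,
    (∀ z : ℂ × ℂ, (P z : ℂ) = MvPolynomial.eval ![z.1, conj z.1, z.2, conj z.2] Q) ∧
    ∀ m ∈ Q.support, (m 1 ≠ 0 ∨ m 3 ≠ 0) ∧ (m 0 ≠ 0 ∨ m 2 ≠ 0)

/-- `P` is pluriharmonic: the real part of an entire function. -/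
def IsPluriharmonic (P : ℂ × ℂ → ℝ) : Prop :=
  ∃ f : ℂ × ℂ → ℂ, Differentiable ℂ f ∧ ∀ z, P z = (f z).re

/-- `P` is homogeneous of degree `d`. -/
def HomogeneousDeg (P : ℂ × ℂ → ℝ) (d : ℕ) : Prop :=
  ∀ t : ℝ, 0 < t → ∀ z : ℂ × ℂ, P (t • z) = t ^ d * P z

/-- The directions `ζ` such that `P` is harmonic along the line `{(ζw, w)}`. -/
def harmDirs (P : ℂ × ℂ → ℝ) : Set ℂ := {ζ | IsHarmonic fun w => P (ζ * w, w)}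

/-- The union of all complex lines through `0` along which `P` is harmonic. -/
def linesUnion (P : ℂ × ℂ → ℝ) : Set (ℂ × ℂ) :=
  {z | (∃ ζ ∈ harmDirs P, z.1 = ζ * z.2) ∨
       (IsHarmonic (fun w => P (w, 0)) ∧ z.2 = 0)}

/-- `P` is harmonic along the smooth part of the set `V`: for every injective
holomorphic parametrization by the unit disc of a piece of `V`, the pullback
of `P` is harmonic. -/
def HarmonicAlong (P : ℂ × ℂ → ℝ) (V : Set (ℂ × ℂ)) : Prop :=
  ∀ φ : ℂ → ℂ × ℂ, DifferentiableOn ℂ φ (Metric.ball 0 1) →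
    Set.InjOn φ (Metric.ball 0 1) → φ '' Metric.ball 0 1 ⊆ V →
    ∀ ζ ∈ Metric.ball (0 : ℂ) 1, lap (fun w => P (φ w)) ζ = 0

/-- `S` contains no complex-analytic subvariety of positive dimension. -/
def NoPosDimVariety (S : Set (ℂ × ℂ)) : Prop :=
  ∀ φ : ℂ → ℂ × ℂ, DifferentiableOn ℂ φ (Metric.ball 0 1) →
    φ '' Metric.ball 0 1 ⊆ S →
    ∀ x ∈ Metric.ball (0 : ℂ) 1, ∀ y ∈ Metric.ball (0 : ℂ) 1, φ x = φ y

/-- Property (A) for a homogeneous polynomial `P`. -/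
def PropertyA (P : ℂ × ℂ → ℝ) : Prop :=
  NoPosDimVariety (leviDegen P \ linesUnion P) ∧
  ∃ W : Set (ℂ × ℂ), IsClosed W ∧ (∀ z ∈ W, ∀ t : ℝ, 0 < t → t • z ∈ W) ∧
    leviDegen P \ linesUnion P ⊆ W ∧ interior W ∩ linesUnion P = ∅

/-- Property (B): there is an entire function all of whose level curves have
smooth part along which `P` is harmonic. -/
def PropertyB (P : ℂ × ℂ → ℝ) : Prop :=
  ∃ H : ℂ × ℂ → ℂ, Differentiable ℂ H ∧ ∀ c : ℂ, HarmonicAlong P (H ⁻¹' {c})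

/-- The anisotropic dilation `(t^{1/m₁}z₁, t^{1/m₂}z₂)`. -/
def wdil (m₁ m₂ : ℕ) (t : ℝ) (z : ℂ × ℂ) : ℂ × ℂ :=
  (((t ^ ((m₁ : ℝ)⁻¹) : ℝ) : ℂ) * z.1, ((t ^ ((m₂ : ℝ)⁻¹) : ℝ) : ℂ) * z.2)

/-- `(m₁,m₂)`-homogeneity with weight `r`. -/
def WHomog (m₁ m₂ : ℕ) (P : ℂ × ℂ → ℝ) (r : ℝ) : Prop :=
  ∀ t : ℝ, 0 < t → ∀ z : ℂ × ℂ, P (wdil m₁ m₂ t z) = t ^ r * P z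

/-- The weighted curve `{z₁^a = ζ z₂^b}`. -/
def wCurve (a b : ℕ) (ζ : ℂ) : Set (ℂ × ℂ) := {z | z.1 ^ a = ζ * z.2 ^ b}

/-- The parameters `ζ ∈ ℂ` of weighted curves along which `P` is harmonic. -/
def wHarmDirs (P : ℂ × ℂ → ℝ) (a b : ℕ) : Set ℂ :=
  {ζ | HarmonicAlong P (wCurve a b ζ)}

/-- The union of all curves in `E(P)` (including the one for `ζ = ∞`). -/
def wEUnion (P : ℂ × ℂ → ℝ) (a b : ℕ) : Set (ℂ × ℂ) :=
  {z | (∃ ζ ∈ wHarmDirs P a b, z.1 ^ a = ζ * z.2 ^ b) ∨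
       (HarmonicAlong P {w : ℂ × ℂ | w.2 = 0} ∧ z.2 = 0)}

/-- Property (A) in the `(m₁,m₂)`-homogeneous setting (with wedges). -/
def PropertyAW (m₁ m₂ : ℕ) (P : ℂ × ℂ → ℝ) : Prop :=
  NoPosDimVariety (leviDegen P \ wEUnion P (m₁ / Nat.gcd m₁ m₂) (m₂ / Nat.gcd m₁ m₂)) ∧
  ∃ W : Set (ℂ × ℂ), IsClosed W ∧ (∀ z ∈ W, ∀ t : ℝ, 0 < t → wdil m₁ m₂ t z ∈ W) ∧
    leviDegen P \ wEUnion P (m₁ / Nat.gcd m₁ m₂) (m₂ / Nat.gcd m₁ m₂) ⊆ W ∧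
    interior W ∩ wEUnion P (m₁ / Nat.gcd m₁ m₂) (m₂ / Nat.gcd m₁ m₂) = ∅

/-! ### Second derivatives, the Levi form and the Laplacian -/

section Calculus

variable {E : Type*} [NormedAddCommGroup E] [NormedSpace ℝ E]

/-- The Hessian `D²f(z)(u, v)` of a real-valued function. -/
def hess (f : E → ℝ) (z u v : E) : ℝ := fderiv ℝ (fderiv ℝ f) z u v

lemma fderiv_ofReal_comp {f : E → ℝ} {z : E} (hf : DifferentiableAt ℝ f z) (u : E) :
    fderiv ℝ (fun y => (f y : ℂ)) z u = (fderiv ℝ f z u : ℝ) := by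
  have h : HasFDerivAt (fun y => (f y : ℂ)) (Complex.ofRealCLM.comp (fderiv ℝ f z)) z :=
    Complex.ofRealCLM.hasFDerivAt.comp z hf.hasFDerivAt
  rw [h.fderiv]; rfl

lemma hess_symm {f : E → ℝ} (hf : ContDiff ℝ 2 f) (z u v : E) :
    hess f z u v = hess f z v u :=
  (hf.contDiffAt.isSymmSndFDerivAt (by simp)) u v

lemma hess_add_left (f : E → ℝ) (z u u' v : E) :
    hess f z (u + u') v = hess f z u v + hess f z u' v := by simp [hess]

lemma hess_add_right (f : E → ℝ) (z u v v' : E) :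
    hess f z u (v + v') = hess f z u v + hess f z u v' := by simp [hess]

lemma hess_smul_left (f : E → ℝ) (z u v : E) (a : ℝ) :
    hess f z (a • u) v = a * hess f z u v := by simp [hess]

lemma hess_smul_right (f : E → ℝ) (z u v : E) (a : ℝ) :
    hess f z u (a • v) = a * hess f z u v := by simp [hess]

lemma differentiable_fderiv {f : E → ℝ} (hf : ContDiff ℝ 2 f) :
    Differentiable ℝ (fderiv ℝ f) :=
  (hf.fderiv_right (m := 1) (by norm_num)).differentiable (by norm_num)

lemma hasFDerivAt_fderiv_apply {f : E → ℝ} (hf : ContDiff ℝ 2 f) (z u : E) :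
    HasFDerivAt (fun y => fderiv ℝ f y u)
      ((fderiv ℝ (fderiv ℝ f) z).flip u) z := by
  have h := (differentiable_fderiv hf z).hasFDerivAt
  simpa using h.clm_apply (hasFDerivAt_const u z)

/-- Derivative in the direction `d` of the two summands of a conjugate Wirtinger derivative. -/
lemma fderiv_wirtinger {f : E → ℝ} (hf : ContDiff ℝ 2 f) (z e e' d : E) :
    fderiv ℝ (fun y => (1 / 2 : ℂ) * (fderiv ℝ (fun w => (f w : ℂ)) y e
      + Complex.I * fderiv ℝ (fun w => (f w : ℂ)) y e')) z d
      = (1 / 2) * ((hess f z d e : ℂ) + Complex.I * (hess f z d e' : ℂ)) := by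
  have hd : Differentiable ℝ f := hf.differentiable (by norm_num)
  simp_rw [fderiv_ofReal_comp (hd _)]
  have h1 := Complex.ofRealCLM.hasFDerivAt.comp z (hasFDerivAt_fderiv_apply hf z e)
  have h2 := Complex.ofRealCLM.hasFDerivAt.comp z (hasFDerivAt_fderiv_apply hf z e')
  have h := (h1.add (h2.const_mul Complex.I)).const_mul (1 / 2 : ℂ)
  have h' : HasFDerivAt (fun y => (1 / 2 : ℂ) * (((fderiv ℝ f y e : ℝ) : ℂ)
      + Complex.I * ((fderiv ℝ f y e' : ℝ) : ℂ))) _ z := h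
  rw [h'.fderiv]
  simp [hess, mul_add]

lemma hasDerivAt_line {f : E → ℝ} (hf : ContDiff ℝ 2 f) (z v : E) (t : ℝ) :
    HasDerivAt (fun t : ℝ => f (z + t • v)) (fderiv ℝ f (z + t • v) v) t := by
  have hl : HasDerivAt (fun t : ℝ => z + t • v) v t := by
    simpa using ((hasDerivAt_id t).smul_const v).const_add z
  exact ((hf.differentiable (by norm_num)) _).hasFDerivAt.comp_hasDerivAt t hl

lemma hasDerivAt_line_two {f : E → ℝ} (hf : ContDiff ℝ 2 f) (z v : E) :
    HasDerivAt (fun t : ℝ => fderiv ℝ f (z + t • v) v) (hess f z v v) 0 := by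
  have hl : HasDerivAt (fun t : ℝ => z + t • v) v 0 := by
    simpa using ((hasDerivAt_id (0 : ℝ)).smul_const v).const_add z
  have h := hasFDerivAt_fderiv_apply hf (z + (0 : ℝ) • v) v
  have := h.comp_hasDerivAt (0 : ℝ) hl
  simp only [zero_smul, add_zero] at this
  exact this

/-- The Hessian on the diagonal is the second derivative along a line, in the form used to
compute it: any explicit first and second derivatives along the line will do. -/
lemma hess_eq_of_line {f : E → ℝ} (hf : ContDiff ℝ 2 f) (z v : E) {g' : ℝ → ℂ} {b : ℂ}
    (h1 : ∀ t : ℝ, HasDerivAt (fun t : ℝ => (f (z + t • v) : ℂ)) (g' t) t)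
    (h2 : HasDerivAt g' b 0) : (hess f z v v : ℂ) = b := by
  have e : g' = fun t : ℝ => ((fderiv ℝ f (z + t • v) v : ℝ) : ℂ) := by
    funext t
    exact (h1 t).unique (hasDerivAt_line hf z v t).ofReal_comp
  rw [e] at h2
  exact (hasDerivAt_line_two hf z v).ofReal_comp.unique h2

lemma second_deriv_nonneg_of_min {f f' : ℝ → ℝ} {b : ℝ} (hmin : ∀ t, f 0 ≤ f t)
    (h1 : ∀ t, HasDerivAt f (f' t) t) (h2 : HasDerivAt f' b 0) : f' 0 = 0 ∧ 0 ≤ b := by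
  have hloc : IsLocalMin f 0 := Filter.Eventually.of_forall hmin
  have h0 : f' 0 = 0 := hloc.hasDerivAt_eq_zero (h1 0)
  refine ⟨h0, ?_⟩
  by_contra! hb
  have hd : deriv f = f' := funext fun t => (h1 t).deriv
  have hmax : IsLocalMax f 0 :=
    isLocalMax_of_deriv_deriv_neg (by rw [hd, h2.deriv]; exact hb) (by rw [hd, h0])
      (h1 0).continuousAt
  -- A local maximum which is a minimum forces `f` to be constant near `0`.
  have hc : f =ᶠ[nhds 0] fun _ => f 0 := by
    filter_upwards [hmax] with t ht using le_antisymm ht (hmin t)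
  have hc' : f' =ᶠ[nhds 0] fun _ => 0 := by
    have := hc.deriv
    rw [hd] at this
    simpa using this
  have : b = 0 := h2.unique ((hasDerivAt_const (0 : ℝ) (0 : ℝ)).congr_of_eventuallyEq hc')
  exact hb.ne this

end Calculus

/-- Four times the Levi form, written with the real Hessian: the Laplacian at `0` of
`s ↦ f (z + s v)`. -/
def levi (f : ℂ × ℂ → ℝ) (z v : ℂ × ℂ) : ℝ :=
  hess f z v v + hess f z (Complex.I • v) (Complex.I • v)

lemma mixedDeriv_eq {f : ℂ × ℂ → ℝ} (hf : ContDiff ℝ 2 f) (d e z : ℂ × ℂ) :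
    mixedDeriv f d e z = (1 / 4) * ((hess f z d e : ℂ) + Complex.I * hess f z d (Complex.I • e)
      - Complex.I * (hess f z (Complex.I • d) e
        + Complex.I * hess f z (Complex.I • d) (Complex.I • e))) := by
  unfold mixedDeriv wd wdbar
  rw [fderiv_wirtinger hf, fderiv_wirtinger hf]
  ring

lemma leviForm_eq {f : ℂ × ℂ → ℝ} (hf : ContDiff ℝ 2 f) (z v : ℂ × ℂ) :
    leviForm f z v = ((1 / 4 * levi f z v : ℝ) : ℂ) := by
  obtain ⟨⟨a, b⟩, ⟨c, d⟩⟩ := v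
  have hv : ((⟨a, b⟩, ⟨c, d⟩) : ℂ × ℂ) = a • ((1, 0) : ℂ × ℂ) + b • (Complex.I • ((1, 0) : ℂ × ℂ))
      + c • ((0, 1) : ℂ × ℂ) + d • (Complex.I • ((0, 1) : ℂ × ℂ)) := by
    refine Prod.ext (Complex.ext ?_ ?_) (Complex.ext ?_ ?_) <;> simp
  have hIv : Complex.I • ((⟨a, b⟩, ⟨c, d⟩) : ℂ × ℂ) = (-b) • ((1, 0) : ℂ × ℂ)
      + a • (Complex.I • ((1, 0) : ℂ × ℂ))
      + (-d) • ((0, 1) : ℂ × ℂ) + c • (Complex.I • ((0, 1) : ℂ × ℂ)) := by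
    refine Prod.ext (Complex.ext ?_ ?_) (Complex.ext ?_ ?_) <;> simp
  unfold leviForm levi
  rw [hIv, hv]
  simp only [mixedDeriv_eq hf, hess_add_left, hess_add_right, hess_smul_left, hess_smul_right]
  rw [hess_symm hf z (Complex.I • (1, 0)) (1, 0), hess_symm hf z (Complex.I • (0, 1)) (0, 1),
    hess_symm hf z (0, 1) (1, 0), hess_symm hf z (Complex.I • (0, 1)) (1, 0),
    hess_symm hf z (0, 1) (Complex.I • (1, 0)),
    hess_symm hf z (Complex.I • (0, 1)) (Complex.I • (1, 0))]
  apply Complex.ext <;> simp <;> ring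

/-- On a line of harmonicity the Levi form vanishes in the direction of the line. -/
lemma levi_eq_zero_of_harmonic {f : ℂ × ℂ → ℝ} (hf : ContDiff ℝ 2 f) {ζ : ℂ}
    (h : IsHarmonic fun w => f (ζ * w, w)) (w : ℂ) : levi f (ζ * w, w) (ζ * w, w) = 0 := by
  have hl : ContDiff ℝ 2 (fun w : ℂ => f (ζ * w, w)) :=
    hf.comp ((contDiff_const.mul contDiff_id).prodMk contDiff_id)
  have h0 := h w
  unfold lap wd1 wdbar1 at h0
  rw [fderiv_wirtinger hl, fderiv_wirtinger hl, hess_symm hl w Complex.I 1] at h0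
  -- The Hessian of the restriction to the line is the restriction of the Hessian.
  have key : ∀ c : ℂ, hess (fun w : ℂ => f (ζ * w, w)) w c c = hess f (ζ * w, w) (ζ * c, c) (ζ * c, c) := by
    intro c
    have := hess_eq_of_line hl w c (g' := fun t => (fderiv ℝ f ((ζ * w, w) + t • (ζ * c, c)) (ζ * c, c) : ℝ))
      (b := hess f (ζ * w, w) (ζ * c, c) (ζ * c, c)) ?_
      (hasDerivAt_line_two hf (ζ * w, w) (ζ * c, c)).ofReal_comp
    · exact_mod_cast this
    · intro t
      convert (hasDerivAt_line hf (ζ * w, w) (ζ * c, c) t).ofReal_comp using 5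
      · simp
        ring
      · simp
  have h1 : hess f (ζ * w, w) (ζ * 1, 1) (ζ * 1, 1) + hess f (ζ * w, w) (ζ * I, I) (ζ * I, I) = 0 := by
    rw [← key, ← key]
    have := congrArg Complex.re h0
    simp at this
    linarith
  have aux : ∀ (p v e₁ e₂ : ℂ × ℂ) (a b : ℝ), v = a • e₁ + b • e₂ → I • v = (-b) • e₁ + a • e₂ →
      hess f p e₁ e₁ + hess f p e₂ e₂ = 0 → levi f p v = 0 := by
    intro p v e₁ e₂ a b hv hIv hp
    unfold levi
    rw [hIv, hv]
    simp only [hess_add_left, hess_add_right, hess_smul_left, hess_smul_right]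
    linear_combination (a ^ 2 + b ^ 2) * hp
  refine aux _ _ _ _ w.re w.im ?_ ?_ h1
  · refine Prod.ext (Complex.ext ?_ ?_) (Complex.ext ?_ ?_) <;> simp <;> ring
  · refine Prod.ext (Complex.ext ?_ ?_) (Complex.ext ?_ ?_) <;> simp <;> ring

/-! ### Decomposition into bihomogeneous parts -/

lemma contDiff_of_isRealPoly2 {P : ℂ × ℂ → ℝ} (h : IsRealPoly2 P) : ContDiff ℝ 2 P := by
  obtain ⟨Q, hQ⟩ := h
  have hre : P = fun z => Complex.reCLM
      (MvPolynomial.eval ![z.1, conj z.1, z.2, conj z.2] Q) := by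
    funext z
    rw [← hQ z]
    simp
  rw [hre]
  refine Complex.reCLM.contDiff.comp ?_
  simp only [MvPolynomial.eval_eq', Fin.prod_univ_four]
  have hc : ContDiff ℝ 2 (fun w : ℂ => conj w) := Complex.conjCLE.contDiff
  refine ContDiff.sum fun m _ => contDiff_const.mul ?_
  have h1 : ContDiff ℝ 2 (fun z : ℂ × ℂ => z.1) := contDiff_fst
  have h2 : ContDiff ℝ 2 (fun z : ℂ × ℂ => z.2) := contDiff_snd
  exact (((h1.pow _).mul ((hc.comp h1).pow _)).mul (h2.pow _)).mul ((hc.comp h2).pow _)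

/-- A polynomial function which is homogeneous of degree `d` is given by the degree `d` part
of any polynomial representing it. -/
lemma eval_homogeneousComponent {P : ℂ × ℂ → ℝ} {d : ℕ} {Q : MvPolynomial (Fin 4) ℂ}
    (hQ : ∀ z : ℂ × ℂ, (P z : ℂ) = MvPolynomial.eval ![z.1, conj z.1, z.2, conj z.2] Q)
    (hhom : HomogeneousDeg P d) (z : ℂ × ℂ) :
    (P z : ℂ) = MvPolynomial.eval ![z.1, conj z.1, z.2, conj z.2]
      (MvPolynomial.homogeneousComponent d Q) := by
  set x : Fin 4 → ℂ := ![z.1, conj z.1, z.2, conj z.2] with hx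
  -- The polynomial `∑ m, Q_m(z) T ^ |m|` in `T`, which at real `T > 0` takes the value `P (T z)`.
  let q : Polynomial ℂ := ∑ m ∈ Q.support,
    Polynomial.monomial m.degree (Q.coeff m * ∏ i, x i ^ m i)
  have hq : ∀ t : ℝ, 0 < t → q.eval (t : ℂ) = (Polynomial.monomial d (P z : ℂ)).eval (t : ℂ) := by
    intro t ht
    have h1 := hQ (t • z)
    rw [hhom t ht z] at h1
    have hx' : ![(t • z).1, conj (t • z).1, (t • z).2, conj (t • z).2] = fun i => (t : ℂ) * x i := by
      funext i
      fin_cases i <;> simp [hx]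
    rw [hx', MvPolynomial.eval_eq'] at h1
    rw [Polynomial.eval_monomial, mul_comm]
    push_cast at h1
    rw [h1]
    simp only [q, Polynomial.eval_finsetSum, Polynomial.eval_monomial]
    refine Finset.sum_congr rfl fun m _ => ?_
    simp only [mul_pow, Finset.prod_mul_distrib, Finset.prod_pow_eq_pow_sum]
    rw [Finsupp.degree_eq_sum]
    ring
  have hqe : q = Polynomial.monomial d (P z : ℂ) := by
    refine Polynomial.eq_of_infinite_eval_eq _ _ ?_
    have hinf : (Complex.ofReal '' Set.Ioi (0 : ℝ)).Infinite :=
      (Set.Ioi_infinite (0 : ℝ)).image Complex.ofReal_injective.injOn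
    refine hinf.mono ?_
    rintro _ ⟨t, ht, rfl⟩
    exact hq t ht
  have hcoef := congrArg (fun r => Polynomial.coeff r d) hqe
  simp only [Polynomial.coeff_monomial_same] at hcoef
  rw [← hcoef, MvPolynomial.homogeneousComponent_apply, map_sum]
  simp only [q, Polynomial.finsetSum_coeff, Polynomial.coeff_monomial,
    MvPolynomial.eval_monomial]
  rw [Finset.sum_filter]
  refine Finset.sum_congr rfl fun m _ => ?_
  split_ifs
  · rw [Finsupp.prod_fintype _ _ (fun i => pow_zero _)]
  · rfl

/-- The decomposition `P = ∑ p_j`, where `p_j` is homogeneous of degree `j` in `z` and of degree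
`d - j` in `z̄`; its two extreme terms are antiholomorphic and holomorphic. -/
lemma exists_bihomogeneous_decomposition {P : ℂ × ℂ → ℝ} {d : ℕ} (hpoly : IsRealPoly2 P)
    (hhom : HomogeneousDeg P d) :
    ∃ p : ℕ → ℂ × ℂ → ℂ,
      (∀ z, (P z : ℂ) = ∑ j ∈ Finset.range (d + 1), p j z) ∧
      (∀ j ∈ Finset.range (d + 1), ∀ (w : ℂ) (z : ℂ × ℂ),
        p j (w • z) = w ^ j * conj w ^ (d - j) * p j z) ∧
      Differentiable ℂ (p d) ∧ Differentiable ℂ (fun z => conj (p 0 z)) := by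
  obtain ⟨Q, hQ⟩ := hpoly
  set H := MvPolynomial.homogeneousComponent d Q with hH
  have hdeg : ∀ m ∈ H.support, m 0 + m 1 + m 2 + m 3 = d := by
    intro m hm
    have := (MvPolynomial.homogeneousComponent_isHomogeneous d Q).degree_eq_sum_deg_support hm
    rw [this, ← Finsupp.degree_apply, Finsupp.degree_eq_sum, Fin.sum_univ_four]
  let p : ℕ → ℂ × ℂ → ℂ := fun j z => ∑ m ∈ H.support with m 0 + m 2 = j,
    H.coeff m * (z.1 ^ m 0 * conj z.1 ^ m 1 * z.2 ^ m 2 * conj z.2 ^ m 3)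
  refine ⟨p, ?_, ?_, ?_, ?_⟩
  · intro z
    rw [eval_homogeneousComponent hQ hhom z, ← hH, MvPolynomial.eval_eq']
    simp only [p, Fin.prod_univ_four]
    rw [Finset.sum_fiberwise_of_maps_to]
    · rfl
    · intro m hm
      have := hdeg m hm
      rw [Finset.mem_range]
      omega
  · intro j hj w z
    simp only [p, Finset.mul_sum]
    refine Finset.sum_congr rfl fun m hm => ?_
    rw [Finset.mem_filter] at hm
    have h1 := hdeg m hm.1
    have h2 : d - j = m 1 + m 3 := by omega
    rw [h2, ← hm.2]
    simp only [Prod.smul_fst, Prod.smul_snd, smul_eq_mul, map_mul, mul_pow, pow_add]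
    ring
  · have : p d = fun z => ∑ m ∈ H.support with m 0 + m 2 = d,
        H.coeff m * (z.1 ^ m 0 * z.2 ^ m 2) := by
      funext z
      refine Finset.sum_congr rfl fun m hm => ?_
      rw [Finset.mem_filter] at hm
      have h1 := hdeg m hm.1
      have h2 : m 1 = 0 := by omega
      have h3 : m 3 = 0 := by omega
      simp [h2, h3]
    rw [this]
    fun_prop
  · have : (fun z => conj (p 0 z)) = fun z => ∑ m ∈ H.support with m 0 + m 2 = 0,
        conj (H.coeff m) * (z.1 ^ m 1 * z.2 ^ m 3) := by
      funext z
      simp only [p, map_sum]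
      refine Finset.sum_congr rfl fun m hm => ?_
      rw [Finset.mem_filter] at hm
      have h2 : m 0 = 0 := by omega
      have h3 : m 2 = 0 := by omega
      simp [h2, h3]
    rw [this]
    fun_prop

/-- Radially, the Levi form multiplies the part of bidegree `(j, d - j)` by `4 j (d - j)`. -/
lemma levi_radial {P : ℂ × ℂ → ℝ} {d : ℕ} {p : ℕ → ℂ × ℂ → ℂ} (hP : ContDiff ℝ 2 P)
    (hsum : ∀ z, (P z : ℂ) = ∑ j ∈ Finset.range (d + 1), p j z)
    (hbi : ∀ j ∈ Finset.range (d + 1), ∀ (w : ℂ) (z : ℂ × ℂ),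
      p j (w • z) = w ^ j * conj w ^ (d - j) * p j z) (z : ℂ × ℂ) :
    (levi P z z : ℂ) = ∑ j ∈ Finset.range (d + 1), (4 * j * (d - j) : ℂ) * p j z := by
  -- Second derivative of `t ↦ P ((1 + t c) z)` at `0`, for a complex number `c`.
  have key : ∀ c : ℂ, (hess P z (c • z) (c • z) : ℂ) = ∑ j ∈ Finset.range (d + 1),
      (j * (j - 1) * c ^ 2 + 2 * j * (d - j) * c * conj c
        + (d - j) * (d - j - 1) * conj c ^ 2 : ℂ) * p j z := by
    intro c
    have hA : ∀ t : ℝ, HasDerivAt (fun t : ℝ => (1 + t * c : ℂ)) c t := fun t => by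
      simpa using ((hasDerivAt_id t).ofReal_comp.mul_const c).const_add 1
    have hB : ∀ t : ℝ, HasDerivAt (fun t : ℝ => (1 + t * conj c : ℂ)) (conj c) t := fun t => by
      simpa using ((hasDerivAt_id t).ofReal_comp.mul_const (conj c)).const_add 1
    refine hess_eq_of_line hP z (c • z)
      (g' := fun t : ℝ => ∑ j ∈ Finset.range (d + 1),
        ((j * (1 + t * c) ^ (j - 1) * c) * (1 + t * conj c) ^ (d - j)
          + (1 + t * c) ^ j * (((d - j : ℕ) : ℂ) * (1 + t * conj c) ^ (d - j - 1) * conj c))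
            * p j z) ?_ ?_
    · intro t
      have e : (fun t : ℝ => (P (z + t • c • z) : ℂ)) = fun t : ℝ => ∑ j ∈ Finset.range (d + 1),
          (1 + t * c) ^ j * (1 + t * conj c) ^ (d - j) * p j z := by
        funext t
        have : z + t • c • z = (1 + t * c : ℂ) • z := by
          ext <;> simp <;> ring
        rw [this, hsum]
        refine Finset.sum_congr rfl fun j hj => ?_
        rw [hbi j hj]
        simp
      rw [e]
      exact HasDerivAt.fun_sum fun j _ =>
        (((hA t).fun_pow j).mul ((hB t).fun_pow (d - j))).mul_const (p j z)
    · have h := HasDerivAt.fun_sum (u := Finset.range (d + 1)) (x := (0 : ℝ)) fun j _ =>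
        (((((((hA 0).fun_pow (j - 1)).const_mul (j : ℂ)).mul_const c).mul
          ((hB 0).fun_pow (d - j))).add
          (((hA 0).fun_pow j).mul
            ((((hB 0).fun_pow (d - j - 1)).const_mul ((d - j : ℕ) : ℂ)).mul_const
              (conj c)))).mul_const (p j z))
      refine h.congr_deriv (Finset.sum_congr rfl fun j hj => ?_)
      have hjd : j ≤ d := Nat.lt_succ_iff.mp (Finset.mem_range.mp hj)
      have hn : ∀ n : ℕ, (n : ℂ) * ((n - 1 : ℕ) : ℂ) = n * (n - 1) := by
        intro n
        cases n <;> simp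
      have hn2 := hn (d - j)
      simp only [Complex.ofReal_zero, zero_mul, add_zero, one_pow, mul_one, one_mul]
      rw [Nat.cast_sub hjd] at hn2 ⊢
      linear_combination (c ^ 2 * p j z) * hn j + (conj c ^ 2 * p j z) * hn2
  have h1 := key 1
  have hI := key I
  rw [one_smul] at h1
  unfold levi
  push_cast
  rw [h1, hI, ← Finset.sum_add_distrib]
  refine Finset.sum_congr rfl fun j _ => ?_
  simp only [map_one, Complex.conj_I]
  linear_combination (j * (j - 1) - 2 * j * (d - j) + (d - j) * (d - j - 1) : ℂ) * p j z * Complex.I_sq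

/-! ### Averaging over roots of unity -/

/-- A primitive root of unity of order `2k + 1`. -/
def rootU (k : ℕ) : ℂ := Complex.exp (2 * Real.pi * Complex.I / ((2 * k + 1 : ℕ) : ℂ))

/-- The sum of `P` over the rotations by the `(2k+1)`-st roots of unity. For `P` homogeneous of
degree `2k` it is `2k + 1` times the part of bidegree `(k, k)`, that is, times the average of `P`
over circles. -/
def rotSum (k : ℕ) (P : ℂ × ℂ → ℝ) (z : ℂ × ℂ) : ℝ :=
  ∑ l ∈ Finset.range (2 * k + 1), P (rootU k ^ l • z)

lemma rootU_primitive (k : ℕ) : IsPrimitiveRoot (rootU k) (2 * k + 1) :=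
  Complex.isPrimitiveRoot_exp _ (by omega)

lemma conj_rootU (k : ℕ) : conj (rootU k) = (rootU k)⁻¹ := by
  have h : ‖rootU k‖ = 1 := (rootU_primitive k).norm'_eq_one (by omega)
  rw [Complex.inv_def, Complex.normSq_eq_norm_sq, h]
  simp

lemma rootU_ne_zero (k : ℕ) : rootU k ≠ 0 := Complex.exp_ne_zero _

/-- Orthogonality of the characters `w ↦ w ^ j * w̄ ^ (2k - j)`, `0 ≤ j ≤ 2k`, on the group of
`(2k+1)`-st roots of unity. As `2k + 1` is odd, these characters are distinct. -/
lemma sum_character (k : ℕ) {i j : ℕ} (hi : i ≤ 2 * k) (hj : j ≤ 2 * k) :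
    ∑ l ∈ Finset.range (2 * k + 1),
      ((rootU k ^ l) ^ j * conj (rootU k ^ l) ^ (2 * k - j)) *
        ((rootU k ^ l) ^ (2 * k - i) * conj (rootU k ^ l) ^ i)
      = if j = i then (2 * k + 1 : ℂ) else 0 := by
  have h0 := rootU_ne_zero k
  have e : ∀ l : ℕ, ((rootU k ^ l) ^ j * conj (rootU k ^ l) ^ (2 * k - j)) *
        ((rootU k ^ l) ^ (2 * k - i) * conj (rootU k ^ l) ^ i)
      = (rootU k ^ (2 * ((j : ℤ) - i))) ^ l := by
    intro l
    rw [map_pow, conj_rootU]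
    simp only [← zpow_natCast, ← zpow_mul, inv_zpow', ← zpow_add₀ h0]
    congr 1
    push_cast [Nat.cast_sub hi, Nat.cast_sub hj]
    ring
  simp only [e]
  split_ifs with hji
  · subst hji
    simp
  · set q := rootU k ^ (2 * ((j : ℤ) - i)) with hq
    have hq1 : q ≠ 1 := by
      intro h
      rw [hq, (rootU_primitive k).zpow_eq_one_iff_dvd] at h
      have hco : IsCoprime (((2 * k + 1 : ℕ) : ℤ)) 2 := ⟨1, -k, by push_cast; ring⟩
      have h2 := hco.dvd_of_dvd_mul_left h
      have h3 := Int.eq_zero_of_abs_lt_dvd h2 (by rw [abs_lt]; constructor <;> push_cast <;> omega)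
      omega
    have hqn : q ^ (2 * k + 1) = 1 := by
      rw [hq, ← zpow_natCast, ← zpow_mul, mul_comm, zpow_mul, zpow_natCast,
        (rootU_primitive k).pow_eq_one, one_zpow]
    have := mul_geom_sum q (2 * k + 1)
    rw [hqn, sub_self] at this
    exact (mul_eq_zero.mp this).resolve_left (sub_ne_zero.mpr hq1)

/-- Extraction of the coefficient of index `i` from a sum of characters. -/
lemma sum_extract (k : ℕ) {i : ℕ} (hi : i ≤ 2 * k) (a : ℕ → ℂ) :
    ∑ l ∈ Finset.range (2 * k + 1), ((rootU k ^ l) ^ (2 * k - i) * conj (rootU k ^ l) ^ i) *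
      ∑ j ∈ Finset.range (2 * k + 1), ((rootU k ^ l) ^ j * conj (rootU k ^ l) ^ (2 * k - j)) * a j
      = (2 * k + 1) * a i := by
  simp only [Finset.mul_sum]
  rw [Finset.sum_comm]
  have e : ∀ j ∈ Finset.range (2 * k + 1), (∑ l ∈ Finset.range (2 * k + 1),
      ((rootU k ^ l) ^ (2 * k - i) * conj (rootU k ^ l) ^ i) *
        (((rootU k ^ l) ^ j * conj (rootU k ^ l) ^ (2 * k - j)) * a j))
      = if j = i then (2 * k + 1) * a j else 0 := by
    intro j hj
    have := congrArg (· * a j) (sum_character k hi (Nat.lt_succ_iff.mp (Finset.mem_range.mp hj)))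
    simp only [Finset.sum_mul] at this
    rw [ite_mul, zero_mul] at this
    rw [← this]
    exact Finset.sum_congr rfl fun l _ => by ring
  rw [Finset.sum_congr rfl e, Finset.sum_ite_eq', if_pos (Finset.mem_range.mpr (by omega))]

lemma rootU_norm (k l : ℕ) : (rootU k ^ l) * conj (rootU k ^ l) = 1 := by
  rw [map_pow, conj_rootU, ← mul_pow, mul_inv_cancel₀ (rootU_ne_zero k), one_pow]

section Average

variable {k : ℕ} {P : ℂ × ℂ → ℝ}

lemma contDiff_rotSum (hP : ContDiff ℝ 2 P) : ContDiff ℝ 2 (rotSum k P) := by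
  unfold rotSum
  exact ContDiff.sum fun l _ => hP.comp (contDiff_const_smul _)

lemma levi_rotSum (hP : ContDiff ℝ 2 P) (z v : ℂ × ℂ) :
    levi (rotSum k P) z v
      = ∑ l ∈ Finset.range (2 * k + 1), levi P (rootU k ^ l • z) (rootU k ^ l • v) := by
  have key : ∀ v : ℂ × ℂ, hess (rotSum k P) z v v = ∑ l ∈ Finset.range (2 * k + 1),
      hess P (rootU k ^ l • z) (rootU k ^ l • v) (rootU k ^ l • v) := by
    intro v
    have h1 : ∀ t : ℝ, HasDerivAt (fun t : ℝ => rotSum k P (z + t • v))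
        (∑ l ∈ Finset.range (2 * k + 1),
          fderiv ℝ P (rootU k ^ l • z + t • rootU k ^ l • v) (rootU k ^ l • v)) t := by
      intro t
      unfold rotSum
      refine HasDerivAt.fun_sum fun l _ => ?_
      have := hasDerivAt_line hP (rootU k ^ l • z) (rootU k ^ l • v) t
      simpa only [smul_add, smul_comm (rootU k ^ l) (_ : ℝ) v] using this
    have h2 : HasDerivAt (fun t : ℝ => ∑ l ∈ Finset.range (2 * k + 1),
          fderiv ℝ P (rootU k ^ l • z + t • rootU k ^ l • v) (rootU k ^ l • v))
        (∑ l ∈ Finset.range (2 * k + 1),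
          hess P (rootU k ^ l • z) (rootU k ^ l • v) (rootU k ^ l • v)) 0 :=
      HasDerivAt.fun_sum fun l _ => hasDerivAt_line_two hP (rootU k ^ l • z) (rootU k ^ l • v)
    exact_mod_cast hess_eq_of_line (contDiff_rotSum hP) z v (fun t => (h1 t).ofReal_comp)
      h2.ofReal_comp
  unfold levi
  rw [key, key, ← Finset.sum_add_distrib]
  refine Finset.sum_congr rfl fun l _ => ?_
  rw [smul_comm (rootU k ^ l) Complex.I v]

lemma rotSum_homogeneous (hhom : HomogeneousDeg P (2 * k)) : HomogeneousDeg (rotSum k P) (2 * k) := by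
  intro t ht z
  unfold rotSum
  rw [Finset.mul_sum]
  refine Finset.sum_congr rfl fun l _ => ?_
  rw [smul_comm, hhom t ht]

/-- Both sides are multiples of the part of `P` of bidegree `(k, k)`. -/
lemma sum_levi_eq (hpoly : IsRealPoly2 P) (hhom : HomogeneousDeg P (2 * k)) (z : ℂ × ℂ) :
    ∑ l ∈ Finset.range (2 * k + 1), levi P (rootU k ^ l • z) (rootU k ^ l • z)
      = 4 * k ^ 2 * rotSum k P z := by
  have hP := contDiff_of_isRealPoly2 hpoly
  obtain ⟨p, hsum, hbi, -, -⟩ := exists_bihomogeneous_decomposition hpoly hhom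
  have hu : ∀ l : ℕ, (rootU k ^ l) ^ (2 * k - k) * conj (rootU k ^ l) ^ k = 1 := by
    intro l
    rw [show 2 * k - k = k by omega, ← mul_pow, rootU_norm, one_pow]
  have h1 := sum_extract k (i := k) (by omega) (fun j => (4 * j * ((2 * k : ℕ) - j) : ℂ) * p j z)
  have h2 := sum_extract k (i := k) (by omega) (fun j => p j z)
  simp only [hu, one_mul] at h1 h2
  have e1 : ((∑ l ∈ Finset.range (2 * k + 1), levi P (rootU k ^ l • z) (rootU k ^ l • z) : ℝ) : ℂ)
      = (2 * k + 1) * ((4 * k * ((2 * k : ℕ) - k) : ℂ) * p k z) := by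
    rw [← h1]
    push_cast
    refine Finset.sum_congr rfl fun l _ => ?_
    rw [levi_radial hP hsum hbi]
    refine Finset.sum_congr rfl fun j hj => ?_
    rw [hbi j hj]
    push_cast
    ring
  have e2 : ((rotSum k P z : ℝ) : ℂ) = (2 * k + 1) * p k z := by
    rw [← h2]
    unfold rotSum
    push_cast
    refine Finset.sum_congr rfl fun l _ => ?_
    rw [hsum]
    exact Finset.sum_congr rfl fun j hj => hbi j hj _ _
  have : ((∑ l ∈ Finset.range (2 * k + 1), levi P (rootU k ^ l • z) (rootU k ^ l • z) : ℝ) : ℂ)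
      = ((4 * k ^ 2 * rotSum k P z : ℝ) : ℂ) := by
    rw [e1]
    push_cast
    rw [e2]
    ring
  exact_mod_cast this

lemma levi_nonneg (hP : ContDiff ℝ 2 P) (hpsh : IsPsh P) (z v : ℂ × ℂ) : 0 ≤ levi P z v := by
  have := hpsh z v
  rw [leviForm_eq hP, Complex.ofReal_re] at this
  linarith

lemma rotSum_nonneg (hk : 1 ≤ k) (hpoly : IsRealPoly2 P) (hpsh : IsPsh P)
    (hhom : HomogeneousDeg P (2 * k)) (z : ℂ × ℂ) : 0 ≤ rotSum k P z := by
  have h := sum_levi_eq hpoly hhom z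
  have h0 : 0 ≤ ∑ l ∈ Finset.range (2 * k + 1), levi P (rootU k ^ l • z) (rootU k ^ l • z) :=
    Finset.sum_nonneg fun l _ => levi_nonneg (contDiff_of_isRealPoly2 hpoly) hpsh _ _
  have hk' : (0 : ℝ) < 4 * k ^ 2 := by positivity
  rw [h] at h0
  exact nonneg_of_mul_nonneg_right h0 hk'

lemma rotSum_eq_zero_of_harmonic (hk : 1 ≤ k) (hpoly : IsRealPoly2 P)
    (hhom : HomogeneousDeg P (2 * k)) {ζ : ℂ} (hζ : IsHarmonic fun w => P (ζ * w, w)) (w : ℂ) :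
    rotSum k P (ζ * w, w) = 0 := by
  have h := sum_levi_eq hpoly hhom (ζ * w, w)
  rw [Finset.sum_eq_zero] at h
  · have hk' : (0 : ℝ) < 4 * k ^ 2 := by positivity
    exact (mul_eq_zero.mp h.symm).resolve_left hk'.ne'
  · intro l _
    have := levi_eq_zero_of_harmonic (contDiff_of_isRealPoly2 hpoly) hζ (rootU k ^ l * w)
    convert this using 2 <;> simp <;> ring

/-- If the bidegree `(k, k)` part of a plurisubharmonic `P` vanishes, the nonnegative Laplacians
of `P` on complex lines average to zero on circles, hence vanish, and only the holomorphic and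
antiholomorphic parts of `P` are left. -/
lemma isPluriharmonic_of_rotSum_eq_zero (hk : 1 ≤ k) (hpoly : IsRealPoly2 P) (hpsh : IsPsh P)
    (hhom : HomogeneousDeg P (2 * k)) (h0 : ∀ z, rotSum k P z = 0) : IsPluriharmonic P := by
  have hP := contDiff_of_isRealPoly2 hpoly
  obtain ⟨p, hsum, hbi, hhol, hanti⟩ := exists_bihomogeneous_decomposition hpoly hhom
  have hlevi : ∀ z, levi P z z = 0 := by
    intro z
    have h := sum_levi_eq hpoly hhom z
    rw [h0, mul_zero, Finset.sum_eq_zero_iff_of_nonneg fun l _ => levi_nonneg hP hpsh _ _] at h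
    simpa using h 0 (Finset.mem_range.mpr (by omega))
  have hp : ∀ i, 0 < i → i < 2 * k → ∀ z, p i z = 0 := by
    intro i hi0 hi z
    have h1 := sum_extract k (i := i) hi.le (fun j => (4 * j * ((2 * k : ℕ) - j) : ℂ) * p j z)
    rw [Finset.sum_eq_zero] at h1
    · have hne : (2 * k + 1 : ℂ) ≠ 0 := by exact_mod_cast Nat.succ_ne_zero (2 * k)
      have hi0' : (i : ℂ) ≠ 0 := by exact_mod_cast hi0.ne'
      have hi' : ((2 * k : ℕ) - i : ℂ) ≠ 0 := by
        rw [sub_ne_zero]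
        exact_mod_cast hi.ne'
      have := h1.symm
      simpa [hne, hi0', hi', -Nat.cast_mul] using this
    · intro l _
      have h2 := levi_radial hP hsum hbi (rootU k ^ l • z)
      rw [hlevi, Complex.ofReal_zero] at h2
      rw [mul_eq_zero]
      right
      rw [h2]
      refine Finset.sum_congr rfl fun j hj => ?_
      rw [hbi j hj]
      ring
  refine ⟨fun z => p (2 * k) z + conj (p 0 z), hhol.add hanti, fun z => ?_⟩
  have h := hsum z
  rw [Finset.sum_range_succ, Finset.sum_eq_single_of_mem 0 (Finset.mem_range.mpr (by omega))] at h
  · have := congrArg Complex.re h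
    simp at this ⊢
    linarith
  · intro j hj hj0
    exact hp j (Nat.pos_of_ne_zero hj0) (Finset.mem_range.mp hj) z

end Average

/-! ### The maximum principle -/

/-- The squared Euclidean norm on `ℂ²`. -/
def sqNorm (z : ℂ × ℂ) : ℝ := normSq z.1 + normSq z.2

/-- The product of the linear forms defining the lines `{(aw, w)}`, `a ∈ s`. -/
def lineProd (s : Finset ℂ) (z : ℂ × ℂ) : ℂ := ∏ a ∈ s, (z.1 - a * z.2)

lemma sqNorm_smul (t : ℝ) (z : ℂ × ℂ) : sqNorm (t • z) = t ^ 2 * sqNorm z := by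
  simp [sqNorm]
  ring

lemma sqNorm_pos {z : ℂ × ℂ} (hz : z ≠ 0) : 0 < sqNorm z := by
  unfold sqNorm
  have h1 := normSq_nonneg z.1
  have h2 := normSq_nonneg z.2
  rcases h1.lt_or_eq with h | h
  · linarith
  · rcases h2.lt_or_eq with h' | h'
    · linarith
    · exact absurd (Prod.ext (normSq_eq_zero.mp h.symm) (normSq_eq_zero.mp h'.symm)) hz

lemma lineProd_smul (s : Finset ℂ) (t : ℝ) (z : ℂ × ℂ) :
    lineProd s (t • z) = (t : ℂ) ^ s.card * lineProd s z := by
  unfold lineProd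
  rw [← Finset.prod_const, ← Finset.prod_mul_distrib]
  refine Finset.prod_congr rfl fun a _ => ?_
  simp
  ring

lemma continuous_sqNorm : Continuous sqNorm :=
  (continuous_normSq.comp continuous_fst).add (continuous_normSq.comp continuous_snd)

lemma continuous_lineProd (s : Finset ℂ) : Continuous (lineProd s) := by
  unfold lineProd
  fun_prop

section Maximum

variable {k : ℕ} {R : ℂ × ℂ → ℝ} {s : Finset ℂ}

lemma eq_zero_of_lineProd_eq_zero (hz : ∀ a ∈ s, ∀ w, R (a * w, w) = 0) {z : ℂ × ℂ}
    (h : lineProd s z = 0) : R z = 0 := by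
  obtain ⟨a, ha, h⟩ := Finset.prod_eq_zero_iff.mp h
  have : z = (a * z.2, z.2) := Prod.ext (sub_eq_zero.mp h) rfl
  rw [this]
  exact hz a ha _

/-- The quotient `R³|z|² / |E|²`, with value `0` on the zero lines of `E` (where division by
zero gives `0`), is continuous away from the origin: near such a line `R` is bounded by a multiple of
the distance to the line, so the numerator vanishes to order `3` and the denominator to
order `2`. -/
lemma continuousAt_quotient (hR : ContDiff ℝ 2 R) (hnn : ∀ z, 0 ≤ R z)
    (hz : ∀ a ∈ s, ∀ w, R (a * w, w) = 0) {q : ℂ × ℂ} (hq : q ≠ 0) :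
    ContinuousAt (fun z => R z ^ 3 * sqNorm z / normSq (lineProd s z)) q := by
  have hE : Continuous fun z => normSq (lineProd s z) :=
    continuous_normSq.comp (continuous_lineProd s)
  by_cases h0 : lineProd s q = 0
  swap
  · exact (((hR.continuous.pow 3).mul continuous_sqNorm).continuousAt).div hE.continuousAt
      (by simpa using h0)
  obtain ⟨a, ha, hqa⟩ := Finset.prod_eq_zero_iff.mp h0
  have hq1 : q.1 = a * q.2 := sub_eq_zero.mp hqa
  have hq2 : q.2 ≠ 0 := by
    intro h
    exact hq (Prod.ext (by rw [hq1, h, mul_zero]; rfl) h)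
  -- The product of the other linear forms does not vanish at `q`.
  set G : ℂ × ℂ → ℝ := fun z => normSq (lineProd (s.erase a) z) with hG
  have hGc : Continuous G := continuous_normSq.comp (continuous_lineProd _)
  have hGq : G q ≠ 0 := by
    simp only [hG, ne_eq, normSq_eq_zero]
    unfold lineProd
    rw [Finset.prod_eq_zero_iff]
    rintro ⟨b, hb, hb0⟩
    rw [hq1, ← sub_mul, mul_eq_zero, sub_eq_zero] at hb0
    exact (Finset.mem_erase.mp hb).1 (hb0.resolve_right hq2).symm
  have hprod : ∀ z, normSq (lineProd s z) = normSq (z.1 - a * z.2) * G z := by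
    intro z
    simp only [hG, ← map_mul, lineProd]
    rw [Finset.mul_prod_erase s (fun a => z.1 - a * z.2) ha]
  obtain ⟨K, U, hU, hK⟩ := (hR.contDiffAt (x := q)).of_le (show (1 : WithTop ℕ∞) ≤ 2 by norm_num)
    |>.exists_lipschitzOnWith
  have hproj : Filter.Tendsto (fun z : ℂ × ℂ => (a * z.2, z.2)) (nhds q) (nhds q) := by
    have hc : Continuous fun z : ℂ × ℂ => (a * z.2, z.2) := by fun_prop
    have := hc.tendsto q
    rwa [← hq1] at this
  have hbound : ∀ᶠ z in nhds q, R z ^ 3 * sqNorm z / normSq (lineProd s z)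
      ≤ K ^ 3 * ‖z.1 - a * z.2‖ * sqNorm z / G z := by
    filter_upwards [hU, hproj hU] with z hz1 hz2
    have h1 := hK.dist_le_mul z hz1 _ hz2
    rw [hz a ha, Real.dist_eq, sub_zero, abs_of_nonneg (hnn z)] at h1
    have h2 : dist z (a * z.2, z.2) = ‖z.1 - a * z.2‖ := by
      rw [Prod.dist_eq, dist_self, dist_eq_norm]
      simp
    rw [h2] at h1
    have hsq : 0 ≤ sqNorm z := add_nonneg (normSq_nonneg _) (normSq_nonneg _)
    have hGz : 0 ≤ G z := normSq_nonneg _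
    rw [hprod, ← div_div]
    refine div_le_div_of_nonneg_right ?_ hGz
    rw [normSq_eq_norm_sq]
    refine div_le_of_le_mul₀ (by positivity) (by positivity) ?_
    calc R z ^ 3 * sqNorm z ≤ (K * ‖z.1 - a * z.2‖) ^ 3 * sqNorm z := by
          gcongr
          exact hnn z
      _ = _ := by ring
  have hval : R q ^ 3 * sqNorm q / normSq (lineProd s q) = 0 := by simp [h0]
  unfold ContinuousAt
  simp only [hval]
  refine squeeze_zero' (Filter.Eventually.of_forall fun z => ?_) hbound ?_
  · have := hnn z
    exact div_nonneg (mul_nonneg (by positivity) (add_nonneg (normSq_nonneg _) (normSq_nonneg _)))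
      (normSq_nonneg _)
  · have hc : ContinuousAt (fun z : ℂ × ℂ => K ^ 3 * ‖z.1 - a * z.2‖ * sqNorm z / G z) q := by
      refine ContinuousAt.div ?_ hGc.continuousAt hGq
      exact ((continuous_const.mul (by fun_prop)).mul continuous_sqNorm).continuousAt
    have := hc.tendsto
    simpa [hq1] using this

/-- Both `R³|z|²` and `|E|²` are homogeneous of degree `6k + 2`, so the quotient attains its
maximum. -/
lemma exists_max (hR : ContDiff ℝ 2 R) (hnn : ∀ z, 0 ≤ R z) (hhom : HomogeneousDeg R (2 * k))
    (hs : s.card = 3 * k + 1) (hz : ∀ a ∈ s, ∀ w, R (a * w, w) = 0) {y : ℂ × ℂ} (hy : R y ≠ 0) :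
    ∃ (M : ℝ) (q : ℂ × ℂ), 0 < R q ∧ q ≠ 0 ∧
      (∀ z, R z ^ 3 * sqNorm z ≤ M * normSq (lineProd s z)) ∧
      R q ^ 3 * sqNorm q = M * normSq (lineProd s q) := by
  have hE0 : lineProd s 0 = 0 := by
    obtain ⟨a, ha⟩ := Finset.card_pos.mp (by omega : 0 < s.card)
    exact Finset.prod_eq_zero ha (by simp)
  have hne0 : ∀ z, R z ≠ 0 → z ≠ 0 := by
    rintro z hRz rfl
    exact hRz (eq_zero_of_lineProd_eq_zero hz hE0)
  set F : ℂ × ℂ → ℝ := fun z => R z ^ 3 * sqNorm z / normSq (lineProd s z) with hF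
  have hFhom : ∀ t : ℝ, 0 < t → ∀ z, F (t • z) = F z := by
    intro t ht z
    simp only [hF]
    rw [hhom t ht, sqNorm_smul, lineProd_smul, hs, map_mul, map_pow, normSq_ofReal]
    have e1 : (t ^ (2 * k) * R z) ^ 3 * (t ^ 2 * sqNorm z)
        = t ^ (6 * k + 2) * (R z ^ 3 * sqNorm z) := by ring
    have e2 : (t * t) ^ (3 * k + 1) * normSq (lineProd s z)
        = t ^ (6 * k + 2) * normSq (lineProd s z) := by ring
    rw [e1, e2, mul_div_mul_left _ _ (by positivity)]
  have hcompact : IsCompact (Metric.sphere (0 : ℂ × ℂ) 1) := isCompact_sphere _ _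
  have hnormed : ∀ z : ℂ × ℂ, z ≠ 0 → ‖z‖⁻¹ • z ∈ Metric.sphere (0 : ℂ × ℂ) 1 := by
    intro z hz0
    rw [mem_sphere_zero_iff_norm, norm_smul, norm_inv, norm_norm,
      inv_mul_cancel₀ (norm_ne_zero_iff.mpr hz0)]
  have hy0 := hne0 y hy
  obtain ⟨q, hqs, hq⟩ := hcompact.exists_isMaxOn ⟨_, hnormed y hy0⟩ (f := F)
    (fun z hzs => (continuousAt_quotient hR hnn hz
      (ne_zero_of_mem_unit_sphere ⟨z, hzs⟩)).continuousWithinAt)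
  have hmax : ∀ z, z ≠ 0 → F z ≤ F q := by
    intro z hz0
    have := hq (hnormed z hz0)
    rwa [Set.mem_ofPred_eq, hFhom _ (inv_pos.mpr (norm_pos_iff.mpr hz0))] at this
  have hq0 : q ≠ 0 := ne_zero_of_mem_unit_sphere ⟨q, hqs⟩
  have hFy : 0 < F y := by
    have h1 : 0 < R y := lt_of_le_of_ne (hnn y) hy.symm
    have h2 := sqNorm_pos hy0
    have h3 : 0 < normSq (lineProd s y) :=
      normSq_pos.mpr fun h => hy (eq_zero_of_lineProd_eq_zero hz h)
    simp only [hF]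
    positivity
  have hFq : 0 < F q := hFy.trans_le (hmax y hy0)
  have hEq : lineProd s q ≠ 0 := by
    intro h
    simp [hF, h] at hFq
  have hRq : R q ≠ 0 := by
    intro h
    simp [hF, h] at hFq
  refine ⟨F q, q, lt_of_le_of_ne (hnn q) hRq.symm, hq0, fun z => ?_, ?_⟩
  · by_cases hEz : lineProd s z = 0
    · simp [hEz, eq_zero_of_lineProd_eq_zero hz hEz]
    · rw [← div_le_iff₀ (normSq_pos.mpr hEz)]
      exact hmax z (by rintro rfl; exact hEz hE0)
  · rw [← div_eq_iff (by simpa using hEq)]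

end Maximum

lemma fderiv_radial {k : ℕ} {R : ℂ × ℂ → ℝ} (hR : ContDiff ℝ 2 R)
    (hhom : HomogeneousDeg R (2 * k)) (z : ℂ × ℂ) : fderiv ℝ R z z = 2 * k * R z := by
  have h1 := hasDerivAt_line hR z z 0
  rw [zero_smul, add_zero] at h1
  have h2 : HasDerivAt (fun t : ℝ => (1 + t) ^ (2 * k) * R z) (2 * k * R z) 0 := by
    have := (((hasDerivAt_id (0 : ℝ)).const_add 1).fun_pow (2 * k)).mul_const (R z)
    simpa using this
  refine h1.unique (h2.congr_of_eventuallyEq ?_)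
  filter_upwards [lt_mem_nhds (show (-1 : ℝ) < 0 by norm_num)] with t ht
  rw [← hhom (1 + t) (by linarith), add_smul, one_smul]

lemma hasDerivAt_normSq {x : ℝ → ℂ} {x' : ℂ} {t : ℝ} (h : HasDerivAt x x' t) :
    HasDerivAt (fun t => normSq (x t)) (2 * ((x t).re * x'.re + (x t).im * x'.im)) t := by
  have h1 : HasDerivAt (fun t => (x t).re) x'.re t := Complex.reCLM.hasFDerivAt.comp_hasDerivAt t h
  have h2 : HasDerivAt (fun t => (x t).im) x'.im t := Complex.imCLM.hasFDerivAt.comp_hasDerivAt t h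
  simp only [normSq_apply]
  exact ((h1.mul h1).add (h2.mul h2)).congr_deriv (by ring)

lemma hasDerivAt_normSq_two {x x' : ℝ → ℂ} {x'' : ℂ} {t : ℝ} (h : HasDerivAt x (x' t) t)
    (h' : HasDerivAt x' x'' t) :
    HasDerivAt (fun t => 2 * ((x t).re * (x' t).re + (x t).im * (x' t).im))
      (2 * (normSq (x' t) + ((x t).re * x''.re + (x t).im * x''.im))) t := by
  have h1 : HasDerivAt (fun t => (x t).re) (x' t).re t :=
    Complex.reCLM.hasFDerivAt.comp_hasDerivAt t h
  have h2 : HasDerivAt (fun t => (x t).im) (x' t).im t :=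
    Complex.imCLM.hasFDerivAt.comp_hasDerivAt t h
  have h3 : HasDerivAt (fun t => (x' t).re) x''.re t :=
    Complex.reCLM.hasFDerivAt.comp_hasDerivAt t h'
  have h4 : HasDerivAt (fun t => (x' t).im) x''.im t :=
    Complex.imCLM.hasFDerivAt.comp_hasDerivAt t h'
  refine (((h1.mul h3).add (h2.mul h4)).const_mul 2).congr_deriv ?_
  rw [normSq_apply]
  ring

/-- First and second order conditions along a real line through a point of equality in
`R³|z|² ≤ M|E|²`, when `R` is critical along that line. Here `φ` is the restriction of `E` to the
complex line through `q` in the direction `v`, and the real line has direction `c • v`. -/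
lemma conditions_at_max {R : ℂ × ℂ → ℝ} (hR : ContDiff ℝ 2 R) {M : ℝ} {q v : ℂ × ℂ} {φ : ℂ → ℂ}
    (hφ : ContDiff ℂ 2 φ)
    (hle : ∀ w : ℂ, R (q + w • v) ^ 3 * sqNorm (q + w • v) ≤ M * normSq (φ w))
    (heq : R q ^ 3 * sqNorm q = M * normSq (φ 0)) (c : ℂ) (hcrit : fderiv ℝ R q (c • v) = 0) :
    M * ((φ 0).re * (deriv φ 0 * c).re + (φ 0).im * (deriv φ 0 * c).im)
      = R q ^ 3 * ((q.1.re * (c * v.1).re + q.1.im * (c * v.1).im)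
          + (q.2.re * (c * v.2).re + q.2.im * (c * v.2).im)) ∧
    0 ≤ M * (2 * (normSq (deriv φ 0 * c) + ((φ 0).re * (deriv (deriv φ) 0 * c * c).re
          + (φ 0).im * (deriv (deriv φ) 0 * c * c).im)))
      - 3 * R q ^ 2 * hess R q (c • v) (c • v) * sqNorm q
      - R q ^ 3 * (2 * (normSq (c * v.1) + normSq (c * v.2))) := by
  have hφ1 : ∀ w, HasDerivAt φ (deriv φ w) w := fun w =>
    (hφ.differentiable (by norm_num) w).hasDerivAt
  have hφ2 : HasDerivAt (deriv φ) (deriv (deriv φ) 0) 0 :=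
    ((hφ.deriv' (n := 1)).differentiable (by norm_num) 0).hasDerivAt
  have hl : ∀ t : ℝ, HasDerivAt (fun t : ℝ => (t : ℂ) * c) c t := fun t => by
    simpa using (hasDerivAt_id t).ofReal_comp.mul_const c
  have hx : ∀ t : ℝ, HasDerivAt (fun t : ℝ => φ (t * c)) (deriv φ (t * c) * c) t := fun t =>
    (hφ1 _).comp t (hl t)
  have hx' : HasDerivAt (fun t : ℝ => deriv φ (t * c) * c) (deriv (deriv φ) 0 * c * c) 0 := by
    have h0 : HasDerivAt (deriv φ) (deriv (deriv φ) 0) (((0 : ℝ) : ℂ) * c) := by simpa using hφ2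
    exact (h0.comp (0 : ℝ) (hl 0)).mul_const c
  have hlin : ∀ (a b : ℂ) (t : ℝ), HasDerivAt (fun t : ℝ => a + t * (c * b)) (c * b) t :=
    fun a b t => by
      simpa using ((hasDerivAt_id t).ofReal_comp.mul_const (c * b)).const_add a
  have hr := hasDerivAt_line hR q (c • v)
  have hr2 := hasDerivAt_line_two hR q (c • v)
  have hN := fun t => hasDerivAt_normSq (hx t)
  have hN2 := hasDerivAt_normSq_two (hx 0) hx'
  have hZ := fun t => (hasDerivAt_normSq (hlin q.1 v.1 t)).fun_add
    (hasDerivAt_normSq (hlin q.2 v.2 t))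
  have hZ2 := (hasDerivAt_normSq_two (hlin q.1 v.1 0) (hasDerivAt_const 0 (c * v.1))).fun_add
    (hasDerivAt_normSq_two (hlin q.2 v.2 0) (hasDerivAt_const 0 (c * v.2)))
  have h1 := fun t => ((hN t).const_mul M).fun_sub (((hr t).fun_pow 3).fun_mul (hZ t))
  have h2 := (hN2.const_mul M).fun_sub
    ((((((hr 0).fun_pow 2).const_mul 3).fun_mul hr2).fun_mul (hZ 0)).fun_add
      (((hr 0).fun_pow 3).fun_mul hZ2))
  have hmin : ∀ t : ℝ, M * normSq (φ ((0 : ℝ) * c)) - R (q + (0 : ℝ) • c • v) ^ 3 *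
        (normSq (q.1 + (0 : ℝ) * (c * v.1)) + normSq (q.2 + (0 : ℝ) * (c * v.2)))
      ≤ M * normSq (φ (t * c)) - R (q + t • c • v) ^ 3 *
        (normSq (q.1 + t * (c * v.1)) + normSq (q.2 + t * (c * v.2))) := by
    intro t
    have h := hle (t * c)
    have e : q + ((t : ℂ) * c) • v = q + t • c • v := by
      ext <;> simp [mul_assoc]
    have e2 : sqNorm (q + t • c • v)
        = normSq (q.1 + t * (c * v.1)) + normSq (q.2 + t * (c * v.2)) := by
      simp [sqNorm]
    rw [e, e2] at h
    unfold sqNorm at heq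
    simp only [ofReal_zero, zero_mul, zero_smul, add_zero]
    linarith
  obtain ⟨ha, hb⟩ := second_deriv_nonneg_of_min hmin h1
    (h2.congr_of_eventuallyEq (Filter.Eventually.of_forall fun t => by norm_num))
  constructor
  · simp [hcrit] at ha ⊢
    linarith
  · simp [hcrit] at hb ⊢
    unfold sqNorm
    linarith

/-- A nonnegative plurisubharmonic function, homogeneous of degree `2k`, which vanishes on
`3k + 1` distinct lines is zero. -/
lemma eq_zero_of_many_lines {k : ℕ} (hk : 1 ≤ k) {R : ℂ × ℂ → ℝ} (hR : ContDiff ℝ 2 R)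
    (hlevi : ∀ z v, 0 ≤ levi R z v) (hnn : ∀ z, 0 ≤ R z) (hhom : HomogeneousDeg R (2 * k))
    {s : Finset ℂ} (hs : s.card = 3 * k + 1) (hz : ∀ a ∈ s, ∀ w, R (a * w, w) = 0)
    (y : ℂ × ℂ) : R y = 0 := by
  by_contra hy
  obtain ⟨M, q, hRq, hq0, hle, heq⟩ := exists_max hR hnn hhom hs hz hy
  -- The complex differential `∂R(q)`, up to a factor; it is nonzero in the radial direction.
  let dR : ℂ × ℂ → ℂ := fun v => (fderiv ℝ R q v : ℂ) - I * (fderiv ℝ R q (I • v) : ℂ)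
  have hdR_add : ∀ u v, dR (u + v) = dR u + dR v := by
    intro u v
    simp only [dR, smul_add, map_add]
    push_cast
    ring
  have hdR_smul : ∀ (c : ℂ) (v : ℂ × ℂ), dR (c • v) = c * dR v := by
    intro c v
    have e1 : c • v = c.re • v + c.im • (I • v) := by
      refine Prod.ext (Complex.ext ?_ ?_) (Complex.ext ?_ ?_) <;> simp <;> ring
    have e2 : I • (c • v) = c.re • (I • v) + (-c.im) • v := by
      refine Prod.ext (Complex.ext ?_ ?_) (Complex.ext ?_ ?_) <;> simp <;> ring
    simp only [dR]
    rw [e2, e1]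
    simp only [map_add, map_smul, smul_eq_mul]
    refine Complex.ext ?_ ?_ <;> simp <;> ring
  have hdRq : dR q ≠ 0 := by
    intro h
    have h1 := congrArg Complex.re h
    have h2 : 0 < 2 * (k : ℝ) * R q := by positivity
    rw [← fderiv_radial hR hhom] at h2
    simp [dR] at h1
    linarith
  -- A direction transversal to the line through `q` along which `R` is critical.
  set β : ℂ := -dR (-conj q.2, conj q.1) / dR q with hβ
  set v : ℂ × ℂ := (-conj q.2, conj q.1) + β • q with hv
  have hdRv : dR v = 0 := by
    rw [hv, hdR_add, hdR_smul, hβ, div_mul_cancel₀ _ hdRq]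
    ring
  have hv1 : fderiv ℝ R q ((1 : ℂ) • v) = 0 := by
    have := congrArg Complex.re hdRv
    rw [one_smul]
    simpa [dR] using this
  have hvI : fderiv ℝ R q (I • v) = 0 := by
    have := congrArg Complex.im hdRv
    simpa [dR] using this
  have hφ : ContDiff ℂ 2 (fun w : ℂ => lineProd s (q + w • v)) := by
    unfold lineProd
    refine contDiff_prod fun a _ => ?_
    have e : (fun w : ℂ => (q + w • v).1 - a * (q + w • v).2)
        = fun w : ℂ => (q.1 + w * v.1) - a * (q.2 + w * v.2) := by
      funext w
      simp
    rw [e]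
    fun_prop
  have heq' : R q ^ 3 * sqNorm q = M * normSq (lineProd s (q + (0 : ℂ) • v)) := by simpa using heq
  have hle' : ∀ w : ℂ, R (q + w • v) ^ 3 * sqNorm (q + w • v)
      ≤ M * normSq (lineProd s (q + w • v)) := fun w => hle _
  obtain ⟨a1, b1⟩ := conditions_at_max hR hφ hle' heq' 1 hv1
  obtain ⟨aI, bI⟩ := conditions_at_max hR hφ hle' heq' I hvI
  have hL := hlevi q v
  unfold levi at hL
  rw [one_smul] at b1
  set A := lineProd s (q + (0 : ℂ) • v)
  set A1 := deriv (fun w : ℂ => lineProd s (q + w • v)) 0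
  set A2 := deriv (deriv (fun w : ℂ => lineProd s (q + w • v))) 0
  have hZ := sqNorm_pos hq0
  have hρ : 0 < R q ^ 3 := by positivity
  -- Strict Cauchy–Schwarz for the independent vectors `q` and `v`.
  have hCS : (q.1.re * v.1.re + q.1.im * v.1.im + (q.2.re * v.2.re + q.2.im * v.2.im)) ^ 2
      + (q.1.re * v.1.im - q.1.im * v.1.re + (q.2.re * v.2.im - q.2.im * v.2.re)) ^ 2
      + sqNorm q ^ 2 = sqNorm q * sqNorm v := by
    simp only [hv, sqNorm, normSq_apply]
    simp
    ring
  -- The Laplacian of `R` drops out, as it is nonnegative.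
  have hsum : R q ^ 3 * sqNorm v ≤ M * normSq A1 := by
    have h3 : 0 ≤ 3 * R q ^ 2 * sqNorm q * (hess R q v v + hess R q (I • v) (I • v)) := by
      positivity
    simp only [normSq_apply, sqNorm] at b1 bI h3 ⊢
    simp at b1 bI
    nlinarith
  set x := q.1.re * v.1.re + q.1.im * v.1.im + (q.2.re * v.2.re + q.2.im * v.2.im) with hx
  set y' := q.1.re * v.1.im - q.1.im * v.1.re + (q.2.re * v.2.im - q.2.im * v.2.re) with hy'
  have c1 : M * (A.re * A1.re + A.im * A1.im) = R q ^ 3 * x := by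
    simpa using a1
  have cI : M * (A.re * A1.im - A.im * A1.re) = R q ^ 3 * y' := by
    simp at aI
    rw [hy']
    linarith
  have hprod : (M * normSq A) * (M * normSq A1) = (R q ^ 3) ^ 2 * (x ^ 2 + y' ^ 2) := by
    have : (M * normSq A) * (M * normSq A1) = (M * (A.re * A1.re + A.im * A1.im)) ^ 2
        + (M * (A.re * A1.im - A.im * A1.re)) ^ 2 := by
      simp only [normSq_apply]
      ring
    rw [this, c1, cI]
    ring
  rw [← heq'] at hprod
  have h5 : R q ^ 3 * sqNorm q * (R q ^ 3 * sqNorm v)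
      ≤ R q ^ 3 * sqNorm q * (M * normSq A1) :=
    mul_le_mul_of_nonneg_left hsum (by positivity)
  rw [hprod] at h5
  have h6 : (R q ^ 3) ^ 2 * (sqNorm q * sqNorm v) ≤ (R q ^ 3) ^ 2 * (x ^ 2 + y' ^ 2) := by
    linarith
  have h7 := le_of_mul_le_mul_left h6 (by positivity)
  have h8 : 0 < sqNorm q ^ 2 := by positivity
  linarith

/-- Proposition 1.1: a plurisubharmonic, non-pluriharmonic real
polynomial on `ℂ²`, homogeneous of degree `2k`, is harmonic along at most finitely
many complex lines through the origin. -/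
theorem finitely_many_harmonic_lines (k : ℕ) (hk : 1 ≤ k) (P : ℂ × ℂ → ℝ)
    (hpoly : IsRealPoly2 P) (hpsh : IsPsh P) (hnph : ¬ IsPluriharmonic P)
    (hhom : HomogeneousDeg P (2 * k)) :
    ({ζ : ℂ | IsHarmonic fun w => P (ζ * w, w)} ∪
      {ζ : ℂ | IsHarmonic (fun w => P (w, 0)) ∧ ζ = 0}).Finite := by
  refine Set.Finite.union ?_ ((Set.finite_singleton 0).subset fun ζ h => h.2)
  by_contra hinf
  obtain ⟨s, hsub, hcard⟩ := Set.Infinite.exists_subset_card_eq hinf (3 * k + 1)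
  have hP := contDiff_of_isRealPoly2 hpoly
  refine hnph (isPluriharmonic_of_rotSum_eq_zero hk hpoly hpsh hhom fun z => ?_)
  refine eq_zero_of_many_lines hk (contDiff_rotSum hP) (fun z v => ?_)
    (rotSum_nonneg hk hpoly hpsh hhom) (rotSum_homogeneous hhom) hcard
    (fun a ha w => rotSum_eq_zero_of_harmonic hk hpoly hhom (hsub ha) w) z
  rw [levi_rotSum hP]
  exact Finset.sum_nonneg fun l _ => levi_nonneg hP hpsh _ _

end
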